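/- (Pseudogradient convergence, Polyak–Tsypkin) Let J : ℝ^d → ℝ be differentiable, bounded below, with L-Lipschitz gradient. Let (w_t) be a stochastic process with w_{t+1} = w_t − γ_t s_t, where the conditional expectation of s_t given the past satisfies ⟪∇J(w_t), E[s_t | F_t]⟫ ≥ 0, E[‖s_t‖² | F_t] ≤ C for a constant C, γ_t ≥ 0, Σ γ_t = ∞, and Σ γ_t² < ∞. Then J(w_t) converges almost surely, and Σ_t γ_t ⟪∇J(w_t), E[s_t | F_t]⟫ < ∞ almost surely; in particular liminf_t ⟪∇J(w_t), E[s_t | F_t]⟫ = 0 along the subsequence weighted by γ_t. -/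

import Mathlib

open scoped RealInnerProductSpace BigOperators
open MeasureTheory Filter

/-!
Along the trajectory, the quadratic expansion of `J` bounds the conditional mean of `J (w (t + 1))`
by `J (w t) - γ t * ⟪∇J (w t), E[s t | ℱ t]⟫ + K * C * γ t ^ 2`. Adding the past decreases and
subtracting the past errors therefore turns `J (w t)` into a supermartingale, bounded below because
the errors are summable; it converges almost surely, which forces both the decreases to be summable
and `J (w t)` to converge. When `w 0` is not square integrable, `J (w t)` may fail to be integrable,
so the argument is run under the restrictions of `μ` to the events `‖w 0‖ ≤ k`, which lie in `ℱ 0`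
and hence leave the conditional expectations unchanged.
-/

section Integrability

variable {E F Ω : Type*} {m : MeasurableSpace Ω} {μ : Measure Ω}

theorem ae_of_forall_ae_restrict_norm_le [Norm E] {f : Ω → E} {p : Ω → Prop}
    (h : ∀ k : ℕ, ∀ᵐ ω ∂μ.restrict {ω | ‖f ω‖ ≤ k}, p ω) : ∀ᵐ ω ∂μ, p ω := by
  have hcover : ⋃ k : ℕ, {ω | ‖f ω‖ ≤ k} = Set.univ :=
    Set.iUnion_eq_univ_iff.mpr fun ω => exists_nat_ge ‖f ω‖
  rw [← Measure.restrict_univ (μ := μ), ← hcover]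
  exact (ae_restrict_iUnion_iff _ p).mpr h

theorem memLp_comp_of_lipschitzWith [NormedAddCommGroup E] [NormedAddCommGroup F]
    [IsFiniteMeasure μ] {g : E → F} {f : Ω → E} {K : NNReal} {p : ENNReal}
    (hg : LipschitzWith K g) (hf : MemLp f p μ) : MemLp (fun ω => g (f ω)) p μ := by
  have hg₀ : LipschitzWith K fun x => g x - g 0 := by
    simpa using hg.sub (LipschitzWith.const (g 0))
  have h := (hg₀.comp_memLp (sub_self _) hf).add (memLp_const (g 0))
  exact h.ae_eq (.of_forall fun ω => sub_add_cancel _ _)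

theorem integrable_inner_of_memLp_two [NormedAddCommGroup E] [InnerProductSpace ℝ E] {f g : Ω → E}
    (hf : MemLp f 2 μ) (hg : MemLp g 2 μ) : Integrable (fun ω => ⟪f ω, g ω⟫) μ :=
  memLp_one_iff_integrable.mp ((innerSL ℝ).memLp_of_bilin 1 hf hg)

end Integrability

section Supermartingale

variable {Ω : Type*} {m : MeasurableSpace Ω} {μ : Measure Ω} [IsFiniteMeasure μ]
  {ℱ : Filtration ℕ m} {X Y Z : ℕ → Ω → ℝ} {b : ℕ → ℝ} {a : ℝ}

theorem exists_ae_tendsto_of_supermartingale_of_ae_ge (hX : Supermartingale X ℱ μ)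
    (hX_ge : ∀ t, ∀ᵐ ω ∂μ, a ≤ X t ω) :
    ∀ᵐ ω ∂μ, ∃ l, Tendsto (fun t => X t ω) atTop (nhds l) := by
  have hbdd (t : ℕ) :
      eLpNorm ((-X) t) 1 μ ≤ (∫ ω, X 0 ω ∂μ + ∫ _, 2 * |a| ∂μ).toNNReal := by
    rw [Pi.neg_apply, eLpNorm_neg, eLpNorm_one_eq_lintegral_enorm,
      ← ofReal_integral_norm_eq_lintegral_enorm (hX.integrable t)]
    refine ENNReal.ofReal_le_ofReal ?_
    have habs : ∀ᵐ ω ∂μ, ‖X t ω‖ ≤ X t ω + 2 * |a| := by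
      filter_upwards [hX_ge t] with ω hω
      rw [Real.norm_eq_abs, abs_le']
      constructor <;> linarith [neg_abs_le a, abs_nonneg a]
    have hmean : ∫ ω, X t ω ∂μ ≤ ∫ ω, X 0 ω ∂μ := by
      simpa using hX.setIntegral_le (Nat.zero_le t) MeasurableSet.univ
    calc ∫ ω, ‖X t ω‖ ∂μ
        ≤ ∫ ω, (X t ω + 2 * |a|) ∂μ :=
          integral_mono_ae (hX.integrable t).norm ((hX.integrable t).add (integrable_const _)) habs
      _ = ∫ ω, X t ω ∂μ + ∫ _, 2 * |a| ∂μ := integral_add (hX.integrable t) (integrable_const _)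
      _ ≤ ∫ ω, X 0 ω ∂μ + ∫ _, 2 * |a| ∂μ := by linarith
  filter_upwards [hX.neg.exists_ae_tendsto_of_bdd hbdd] with ω ⟨l, hl⟩
  exact ⟨-l, by simpa using hl.neg⟩

theorem supermartingale_add_sum_of_condExp_le (hX : StronglyAdapted ℱ X)
    (hX_int : ∀ t, Integrable (X t) μ) (hY : StronglyAdapted ℱ Y)
    (hY_int : ∀ t, Integrable (Y t) μ) (hstep : ∀ t, μ[X (t + 1) | ℱ t] ≤ᵐ[μ] X t - Y t) :
    Supermartingale (fun t => X t + ∑ i ∈ Finset.range t, Y i) ℱ μ := by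
  have hsum_int (n : ℕ) : Integrable (∑ i ∈ Finset.range n, Y i) μ :=
    integrable_finsetSum' _ fun i _ => hY_int i
  have hsum_meas {n t : ℕ} (hn : n ≤ t + 1) :
      StronglyMeasurable[ℱ t] (∑ i ∈ Finset.range n, Y i) :=
    Finset.stronglyMeasurable_sum _ fun i hi =>
      (hY i).mono (ℱ.mono (Nat.le_of_lt_succ ((Finset.mem_range.mp hi).trans_le hn)))
  refine supermartingale_nat (fun t => (hX t).add (hsum_meas t.le_succ))
    (fun t => (hX_int t).add (hsum_int t)) fun t => ?_
  have hadd := condExp_add (hX_int (t + 1)) (hsum_int (t + 1)) (ℱ t)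
  rw [condExp_of_stronglyMeasurable (ℱ.le t) (hsum_meas le_rfl) (hsum_int (t + 1))] at hadd
  filter_upwards [hadd, hstep t] with ω hω hstepω
  rw [hω, Finset.sum_range_succ]
  simp only [Pi.add_apply, Pi.sub_apply] at hstepω ⊢
  linarith

theorem exists_tendsto_and_summable_of_tendsto_add_sum {x z : ℕ → ℝ} {l : ℝ}
    (hx : ∀ t, a ≤ x t) (hz : ∀ t, 0 ≤ z t) (hb : Summable b)
    (h : Tendsto (fun t => x t + ∑ i ∈ Finset.range t, (z i - b i)) atTop (nhds l)) :
    (∃ l', Tendsto x atTop (nhds l')) ∧ Summable z := by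
  have hxz : Tendsto (fun t => x t + ∑ i ∈ Finset.range t, z i) atTop (nhds (l + ∑' i, b i)) := by
    refine (h.add hb.hasSum.tendsto_sum_nat).congr fun t => ?_
    rw [Finset.sum_sub_distrib]
    ring
  obtain ⟨B, hB⟩ := hxz.bddAbove_range
  have hz_sum : Summable z := summable_of_sum_range_le (c := B - a) hz fun t => by
    linarith [hB ⟨t, rfl⟩, hx t]
  exact ⟨⟨_, (hxz.sub hz_sum.hasSum.tendsto_sum_nat).congr fun t => add_sub_cancel_right _ _⟩,
    hz_sum⟩

/-- The **Robbins–Siegmund theorem** with deterministic errors and no multiplicative factor. -/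
theorem ae_exists_tendsto_and_summable_of_condExp_le (hX : StronglyAdapted ℱ X)
    (hX_int : ∀ t, Integrable (X t) μ) (hX_ge : ∀ t, ∀ᵐ ω ∂μ, a ≤ X t ω)
    (hZ : StronglyAdapted ℱ Z) (hZ_int : ∀ t, Integrable (Z t) μ)
    (hZ_nonneg : ∀ t, ∀ᵐ ω ∂μ, 0 ≤ Z t ω) (hb : Summable b)
    (hstep : ∀ t, ∀ᵐ ω ∂μ, (μ[X (t + 1) | ℱ t]) ω ≤ X t ω - Z t ω + b t) :
    ∀ᵐ ω ∂μ, (∃ l, Tendsto (fun t => X t ω) atTop (nhds l)) ∧ Summable (fun t => Z t ω) := by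
  have hM : Supermartingale
      (fun t => X t + ∑ i ∈ Finset.range t, fun ω => Z i ω - b i) ℱ μ := by
    refine supermartingale_add_sum_of_condExp_le hX hX_int
      (fun t => (hZ t).sub stronglyMeasurable_const)
      (fun t => (hZ_int t).sub (integrable_const _)) fun t => ?_
    filter_upwards [hstep t] with ω hω
    exact hω.trans_eq (sub_add _ _ _)
  obtain ⟨B, hB⟩ := hb.hasSum.tendsto_sum_nat.bddAbove_range
  have hM_ge (t : ℕ) :
      ∀ᵐ ω ∂μ, a - B ≤ (X t + ∑ i ∈ Finset.range t, fun ω => Z i ω - b i) ω := by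
    filter_upwards [hX_ge t, ae_all_iff.mpr hZ_nonneg] with ω hXω hZω
    have hsum : 0 ≤ ∑ i ∈ Finset.range t, Z i ω := Finset.sum_nonneg fun i _ => hZω i
    rw [Pi.add_apply, Finset.sum_apply, Finset.sum_sub_distrib]
    linarith [hB ⟨t, rfl⟩]
  filter_upwards [exists_ae_tendsto_of_supermartingale_of_ae_ge hM hM_ge, ae_all_iff.mpr hX_ge,
    ae_all_iff.mpr hZ_nonneg] with ω ⟨l, hl⟩ hXω hZω
  simp only [Pi.add_apply, Finset.sum_apply] at hl
  exact exists_tendsto_and_summable_of_tendsto_add_sum hXω hZω hb hl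

end Supermartingale

section LipschitzGradient

variable {E : Type*} [NormedAddCommGroup E] [InnerProductSpace ℝ E] [CompleteSpace E]
  {J : E → ℝ} {K : NNReal}

theorem abs_sub_sub_inner_gradient_le (hJ : Differentiable ℝ J)
    (hLip : LipschitzWith K (gradient J)) (x y : E) :
    |J y - J x - ⟪gradient J x, y - x⟫| ≤ K * ‖y - x‖ ^ 2 := by
  have hbound : ∀ z ∈ Metric.closedBall x ‖y - x‖,
      ‖fderiv ℝ J z - fderiv ℝ J x‖ ≤ K * ‖y - x‖ := fun z hz => by
    rw [← toDual_gradient, ← toDual_gradient, ← map_sub, LinearIsometryEquiv.norm_map]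
    exact (hLip.norm_sub_le z x).trans (by gcongr; exact mem_closedBall_iff_norm.mp hz)
  have h := (convex_closedBall x ‖y - x‖).norm_image_sub_le_of_norm_fderiv_le'
    (fun z _ => hJ z) hbound (Metric.mem_closedBall_self (norm_nonneg _))
    (mem_closedBall_iff_norm.mpr le_rfl)
  rwa [Real.norm_eq_abs, ← inner_gradient_left, mul_assoc, ← sq] at h

variable {Ω : Type*} {m : MeasurableSpace Ω} {μ : Measure Ω} [IsFiniteMeasure μ]

theorem integrable_comp_of_lipschitzWith_gradient {w : Ω → E} (hJ : Differentiable ℝ J)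
    (hLip : LipschitzWith K (gradient J)) (hw : MemLp w 2 μ) :
    Integrable (fun ω => J (w ω)) μ := by
  have hlin : Integrable (fun ω => J 0 + ⟪gradient J 0, w ω⟫) μ :=
    (integrable_const _).add ((hw.integrable one_le_two).const_inner _)
  have hrem : Integrable (fun ω => J (w ω) - (J 0 + ⟪gradient J 0, w ω⟫)) μ := by
    refine ((hw.integrable_norm_pow two_ne_zero).const_mul (K : ℝ)).mono'
      ((hJ.continuous.comp_aestronglyMeasurable hw.1).sub hlin.1) (.of_forall fun ω => ?_)
    simpa [sub_sub] using abs_sub_sub_inner_gradient_le hJ hLip 0 (w ω)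
  exact (hrem.add hlin).congr (.of_forall fun ω => sub_add_cancel _ _)

theorem condExp_comp_add_le {m' : MeasurableSpace Ω} {w v : Ω → E} (hm : m' ≤ m)
    (hJ : Differentiable ℝ J) (hLip : LipschitzWith K (gradient J))
    (hw_meas : StronglyMeasurable[m'] w) (hw : MemLp w 2 μ) (hv : MemLp v 2 μ) :
    ∀ᵐ ω ∂μ, (μ[fun ω => J (w ω + v ω) | m']) ω ≤
      J (w ω) + ⟪gradient J (w ω), (μ[v | m']) ω⟫ + K * (μ[fun ω => ‖v ω‖ ^ 2 | m']) ω := by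
  set A : Ω → ℝ := fun ω => J (w ω)
  set D : Ω → ℝ := fun ω => ⟪gradient J (w ω), v ω⟫
  set S : Ω → ℝ := fun ω => ‖v ω‖ ^ 2
  have hA : Integrable A μ := integrable_comp_of_lipschitzWith_gradient hJ hLip hw
  have hD : Integrable D μ :=
    integrable_inner_of_memLp_two (memLp_comp_of_lipschitzWith hLip hw) hv
  have hS : Integrable S μ := hv.integrable_norm_pow two_ne_zero
  have hA_condExp : μ[A | m'] = A := condExp_of_stronglyMeasurable hm
    (hJ.continuous.comp_stronglyMeasurable hw_meas) hA
  have hD_condExp : μ[D | m'] =ᵐ[μ] fun ω => ⟪gradient J (w ω), (μ[v | m']) ω⟫ :=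
    condExp_bilin_of_stronglyMeasurable_left (innerSL ℝ)
      (hLip.continuous.comp_stronglyMeasurable hw_meas) hD (hv.integrable one_le_two)
  have hle : (fun ω => J (w ω + v ω)) ≤ᵐ[μ] A + D + (K : ℝ) • S := .of_forall fun ω => by
    have h := (abs_le.mp (abs_sub_sub_inner_gradient_le hJ hLip (w ω) (w ω + v ω))).2
    rw [add_sub_cancel_left] at h
    simp only [A, D, S, Pi.add_apply, Pi.smul_apply, smul_eq_mul]
    linarith
  filter_upwards [condExp_mono (m := m')
      (integrable_comp_of_lipschitzWith_gradient hJ hLip (hw.add hv))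
      ((hA.add hD).add (hS.smul (K : ℝ))) hle,
    condExp_add (hA.add hD) (hS.smul (K : ℝ)) m', condExp_add hA hD m',
    condExp_smul (μ := μ) (K : ℝ) S m', hD_condExp] with ω hmono hadd hadd' hsmul hDω
  refine hmono.trans_eq ?_
  rw [hadd, Pi.add_apply, hadd', Pi.add_apply, hsmul, hDω, hA_condExp, Pi.smul_apply, smul_eq_mul]

end LipschitzGradient

section Pseudogradient

variable {E : Type*} [NormedAddCommGroup E] [InnerProductSpace ℝ E] [CompleteSpace E]
  {Ω : Type*} {m : MeasurableSpace Ω} {μ : Measure Ω} [IsFiniteMeasure μ] {ℱ : Filtration ℕ m}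
  {J : E → ℝ} {K : NNReal} {a C : ℝ} {γ : ℕ → ℝ} {w s : ℕ → Ω → E}

theorem condExp_comp_sub_smul_le {m' : MeasurableSpace Ω} {w s : Ω → E} (hm : m' ≤ m)
    (hJ : Differentiable ℝ J) (hLip : LipschitzWith K (gradient J))
    (hw_meas : StronglyMeasurable[m'] w) (hw : MemLp w 2 μ) (hs : MemLp s 2 μ)
    (hmoment : ∀ᵐ ω ∂μ, (μ[fun ω => ‖s ω‖ ^ 2 | m']) ω ≤ C) (c : ℝ) :
    ∀ᵐ ω ∂μ, (μ[fun ω => J (w ω - c • s ω) | m']) ω ≤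
      J (w ω) - c * ⟪gradient J (w ω), (μ[s | m']) ω⟫ + K * C * c ^ 2 := by
  have hsq : (fun ω => ‖((-c) • s) ω‖ ^ 2) = c ^ 2 • fun ω => ‖s ω‖ ^ 2 := by
    ext ω
    simp [norm_smul, mul_pow]
  have h := condExp_comp_add_le hm hJ hLip hw_meas hw (hs.const_smul (-c))
  filter_upwards [hsq ▸ h, condExp_smul (μ := μ) (-c) s m',
    condExp_smul (μ := μ) (c ^ 2) (fun ω => ‖s ω‖ ^ 2) m', hmoment] with ω hω hsω hsqω hmomentω
  have hquad : K * (c ^ 2 * (μ[fun ω => ‖s ω‖ ^ 2 | m']) ω) ≤ K * (c ^ 2 * C) := by gcongr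
  rw [hsω, hsqω] at hω
  simp only [Pi.smul_apply, smul_eq_mul, neg_smul, ← sub_eq_add_neg, inner_neg_right,
    inner_smul_right] at hω
  linarith

theorem pseudogradient_convergence_of_memLp (hJ : Differentiable ℝ J)
    (hLip : LipschitzWith K (gradient J)) (hbdd : ∀ u, a ≤ J u) (hγ_nonneg : ∀ t, 0 ≤ γ t)
    (hγ_sq : Summable fun t => γ t ^ 2) (hw : StronglyAdapted ℱ w) (hw_zero : MemLp (w 0) 2 μ)
    (hs : ∀ t, MemLp (s t) 2 μ) (hupdate : ∀ t ω, w (t + 1) ω = w t ω - γ t • s t ω)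
    (hpseudo : ∀ t, ∀ᵐ ω ∂μ, 0 ≤ ⟪gradient J (w t ω), (μ[s t | ℱ t]) ω⟫)
    (hmoment : ∀ t, ∀ᵐ ω ∂μ, (μ[fun ω => ‖s t ω‖ ^ 2 | ℱ t]) ω ≤ C) :
    ∀ᵐ ω ∂μ, (∃ l, Tendsto (fun t => J (w t ω)) atTop (nhds l)) ∧
      Summable (fun t => γ t * ⟪gradient J (w t ω), (μ[s t | ℱ t]) ω⟫) := by
  have hw_memLp (t : ℕ) : MemLp (w t) 2 μ := by
    induction t with
    | zero => exact hw_zero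
    | succ t ih =>
      rw [funext (hupdate t)]
      exact ih.sub ((hs t).const_smul (γ t))
  refine ae_exists_tendsto_and_summable_of_condExp_le (ℱ := ℱ) (b := fun t => K * C * γ t ^ 2)
    (fun t => hJ.continuous.comp_stronglyMeasurable (hw t))
    (fun t => integrable_comp_of_lipschitzWith_gradient hJ hLip (hw_memLp t))
    (fun t => .of_forall fun ω => hbdd _)
    (fun t => ((hLip.continuous.comp_stronglyMeasurable (hw t)).inner
      stronglyMeasurable_condExp).const_mul (γ t))
    (fun t => (integrable_inner_of_memLp_two (memLp_comp_of_lipschitzWith hLip (hw_memLp t))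
      ((hs t).condExp one_le_two)).const_mul (γ t))
    (fun t => (hpseudo t).mono fun ω hω => mul_nonneg (hγ_nonneg t) hω)
    (hγ_sq.mul_left _) fun t => ?_
  simp only [hupdate]
  exact condExp_comp_sub_smul_le (ℱ.le t) hJ hLip (hw t) (hw_memLp t) (hs t) (hmoment t) (γ t)

theorem pseudogradient_convergence_general (hJ : Differentiable ℝ J)
    (hLip : LipschitzWith K (gradient J)) (hbdd : ∀ u, a ≤ J u) (hγ_nonneg : ∀ t, 0 ≤ γ t)
    (hγ_sq : Summable fun t => γ t ^ 2) (hw : StronglyAdapted ℱ w) (hs : ∀ t, MemLp (s t) 2 μ)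
    (hupdate : ∀ t ω, w (t + 1) ω = w t ω - γ t • s t ω)
    (hpseudo : ∀ t, ∀ᵐ ω ∂μ, 0 ≤ ⟪gradient J (w t ω), (μ[s t | ℱ t]) ω⟫)
    (hmoment : ∀ t, ∀ᵐ ω ∂μ, (μ[fun ω => ‖s t ω‖ ^ 2 | ℱ t]) ω ≤ C) :
    ∀ᵐ ω ∂μ, (∃ l, Tendsto (fun t => J (w t ω)) atTop (nhds l)) ∧
      Summable (fun t => γ t * ⟪gradient J (w t ω), (μ[s t | ℱ t]) ω⟫) := by
  refine ae_of_forall_ae_restrict_norm_le (f := w 0) fun k => ?_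
  set ν := μ.restrict {ω | ‖w 0 ω‖ ≤ k}
  have hB (t : ℕ) : MeasurableSet[ℱ t] {ω | ‖w 0 ω‖ ≤ k} :=
    ℱ.mono (Nat.zero_le t) _ ((hw 0).norm.measurable measurableSet_Iic)
  have hs_condExp (t : ℕ) : ν[s t | ℱ t] =ᵐ[ν] μ[s t | ℱ t] :=
    condExp_restrict_ae_eq_restrict (ℱ.le t) (hB t) ((hs t).integrable one_le_two)
  have hsq_condExp (t : ℕ) : ν[fun ω => ‖s t ω‖ ^ 2 | ℱ t] =ᵐ[ν] μ[fun ω => ‖s t ω‖ ^ 2 | ℱ t] :=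
    condExp_restrict_ae_eq_restrict (ℱ.le t) (hB t) ((hs t).integrable_norm_pow two_ne_zero)
  have hw_zero : MemLp (w 0) 2 ν :=
    .of_bound ((hw 0).mono (ℱ.le 0)).aestronglyMeasurable k (ae_restrict_mem (ℱ.le 0 _ (hB 0)))
  have hpseudo_ν (t : ℕ) : ∀ᵐ ω ∂ν, 0 ≤ ⟪gradient J (w t ω), (ν[s t | ℱ t]) ω⟫ := by
    filter_upwards [hs_condExp t, ae_restrict_of_ae (hpseudo t)] with ω heq hω
    rwa [heq]
  have hmoment_ν (t : ℕ) : ∀ᵐ ω ∂ν, (ν[fun ω => ‖s t ω‖ ^ 2 | ℱ t]) ω ≤ C := by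
    filter_upwards [hsq_condExp t, ae_restrict_of_ae (hmoment t)] with ω heq hω
    rwa [heq]
  filter_upwards [pseudogradient_convergence_of_memLp hJ hLip hbdd hγ_nonneg hγ_sq hw hw_zero
    (fun t => (hs t).restrict _) hupdate hpseudo_ν hmoment_ν, ae_all_iff.mpr hs_condExp]
    with ω hω heq
  simpa only [heq] using hω

end Pseudogradient

/-- Polyak–Tsypkin pseudogradient convergence theorem. -/
theorem pseudogradient_convergence
    {d : ℕ} {Ω : Type*} {m : MeasurableSpace Ω}
    (μ : Measure Ω) [IsProbabilityMeasure μ]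
    (ℱ : Filtration ℕ m)
    (J : EuclideanSpace ℝ (Fin d) → ℝ) (L Jmin C : ℝ)
    (hJ : Differentiable ℝ J)
    (hLip : ∀ u v, ‖gradient J u - gradient J v‖ ≤ L * ‖u - v‖)
    (hbdd : ∀ u, Jmin ≤ J u)
    (γ : ℕ → ℝ) (hγ_nonneg : ∀ t, 0 ≤ γ t)
    (hγ_div : ¬ Summable γ)
    (hγ_sq : Summable (fun t => γ t ^ 2))
    (w s : ℕ → Ω → EuclideanSpace ℝ (Fin d))
    (hw_adapted : Adapted ℱ w)
    (hs_meas : ∀ t, StronglyMeasurable[ℱ (t + 1)] (s t))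
    (hs_int : ∀ t, Integrable (s t) μ)
    (hs_sq_int : ∀ t, Integrable (fun ω => ‖s t ω‖ ^ 2) μ)
    (hupdate : ∀ t ω, w (t + 1) ω = w t ω - γ t • s t ω)
    (hpseudo : ∀ t, ∀ᵐ ω ∂μ,
      0 ≤ ⟪gradient J (w t ω), (μ[s t | ℱ t]) ω⟫)
    (hmoment : ∀ t, ∀ᵐ ω ∂μ,
      (μ[fun ω => ‖s t ω‖ ^ 2 | ℱ t]) ω ≤ C) :
    (∀ᵐ ω ∂μ, ∃ l : ℝ,
        Tendsto (fun t => J (w t ω)) atTop (nhds l)) ∧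
      (∀ᵐ ω ∂μ, Summable (fun t =>
          γ t * ⟪gradient J (w t ω), (μ[s t | ℱ t]) ω⟫)) := by
  rw [← eventually_and]
  exact pseudogradient_convergence_general hJ
    (.of_dist_le' fun u v => by simpa only [dist_eq_norm] using hLip u v) hbdd hγ_nonneg hγ_sq
    (fun t => (hw_adapted t).stronglyMeasurable)
    (fun t => (memLp_two_iff_integrable_sq_norm (hs_int t).1).mpr (hs_sq_int t))
    hupdate hpseudo hmoment
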